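/- In a discrete causal Bayesian network in which every conditional probability table follows the linear edge-flow model, if the edge-unfairness weight w_{A→X} equals zero for every unfair edge A→X (i.e., for every variable X and every parent A of X lying in the sensitive set S), then the interventional distribution of any non-sensitive target variable Y is independent of the value intervened on: P(Y=y | do(S=s)) = P(Y=y | do(S=s')) for all assignments s, s' of values to S and every value y of Y. -/

import Mathlib

open scoped Classical

/-- The interventional probability `P(Y = y | do(S = s))` given by the truncated
factorization: the sum over all full assignments `v` with `v|_S = s` and `v Y = y` of the
product over variables `i ∉ S` of `c i (v|_{Pa i}) (v i)`. -/
noncomputable def doProb {n : ℕ} (α : Fin n → Type) [∀ i, Fintype (α i)]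
    (Pa : Fin n → Finset (Fin n))
    (c : ∀ i : Fin n, (∀ j, j ∈ Pa i → α j) → α i → ℝ)
    (S : Finset (Fin n)) (s : ∀ j, j ∈ S → α j)
    (Y : Fin n) (y : α Y) : ℝ :=
  ∑ v : ∀ j : Fin n, α j,
    if (∀ j (h : j ∈ S), v j = s j h) ∧ v Y = y
    then ∏ i ∈ Sᶜ, c i (fun j _ => v j) (v i) else 0

/-! Swapping the values `s` and `s'` of the sensitive coordinates permutes the full assignments and
carries those extending `s` to those extending `s'`. When all unfair edges have weight zero, the
truncated factorization reads only non-sensitive coordinates, so the permutation matches the two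
sums term by term. -/

section Extensions

variable {ι : Type*} {α : ι → Type*} {S : Finset ι}

/-- The permutation of full assignments that exchanges the values `s j` and `s' j` in each
coordinate `j ∈ S`. Swapping, rather than overwriting `s` by `s'`, makes it a bijection of all
assignments, so that it can reindex a sum over all of them. -/
noncomputable def swapOn (s s' : ∀ j, j ∈ S → α j) : (∀ j, α j) ≃ (∀ j, α j) :=
  Equiv.piCongrRight fun j => if h : j ∈ S then Equiv.swap (s j h) (s' j h) else Equiv.refl (α j)

theorem swapOn_apply_of_mem (s s' : ∀ j, j ∈ S → α j) (v : ∀ j, α j) {j : ι} (hj : j ∈ S) :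
    swapOn s s' v j = Equiv.swap (s j hj) (s' j hj) (v j) := by
  simp [swapOn, hj]

theorem swapOn_apply_of_notMem (s s' : ∀ j, j ∈ S → α j) (v : ∀ j, α j) {j : ι} (hj : j ∉ S) :
    swapOn s s' v j = v j := by
  simp [swapOn, hj]

theorem swapOn_apply_eq_right_iff (s s' : ∀ j, j ∈ S → α j) (v : ∀ j, α j) {j : ι} (hj : j ∈ S) :
    swapOn s s' v j = s' j hj ↔ v j = s j hj := by
  rw [swapOn_apply_of_mem, Equiv.swap_apply_eq_iff, Equiv.swap_apply_right]

variable [Fintype (∀ j, α j)]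

/-- The full assignments that extend the partial assignment `s` to `S`: the range of summation in
the truncated factorization of `do(S = s)`. -/
noncomputable def extensions (s : ∀ j, j ∈ S → α j) : Finset (∀ j, α j) :=
  {v | ∀ j (h : j ∈ S), v j = s j h}

theorem mem_extensions {s : ∀ j, j ∈ S → α j} {v : ∀ j, α j} :
    v ∈ extensions s ↔ ∀ j (h : j ∈ S), v j = s j h :=
  Finset.mem_filter_univ v

theorem swapOn_mem_extensions_iff (s s' : ∀ j, j ∈ S → α j) (v : ∀ j, α j) :
    swapOn s s' v ∈ extensions s' ↔ v ∈ extensions s := by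
  simp only [mem_extensions, swapOn_apply_eq_right_iff]

theorem sum_extensions_eq_of_dependsOn_compl {M : Type*} [AddCommMonoid M]
    {f : (∀ j, α j) → M} (hf : DependsOn f (S : Set ι)ᶜ) (s s' : ∀ j, j ∈ S → α j) :
    ∑ v ∈ extensions s, f v = ∑ v ∈ extensions s', f v :=
  Finset.sum_equiv (swapOn s s') (fun v => (swapOn_mem_extensions_iff s s' v).symm)
    fun v _ => hf fun _ hj => (swapOn_apply_of_notMem s s' v hj).symm

end Extensions

theorem dependsOn_prod_apply {ι M : Type*} {α : ι → Type*} [CommMonoid M] {T : Finset ι}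
    {U : Set ι} {g : ∀ i, (∀ j, α j) → α i → M} (hTU : (T : Set ι) ⊆ U)
    (hg : ∀ i ∈ T, DependsOn (g i) U) :
    DependsOn (fun v => ∏ i ∈ T, g i v (v i)) U := by
  intro v w hvw
  refine Finset.prod_congr rfl fun i hi => ?_
  rw [hg i hi hvw, hvw i (hTU hi)]

section DoProb

variable {n : ℕ} {α : Fin n → Type} {Pa : Fin n → Finset (Fin n)}
  {c : ∀ i : Fin n, (∀ j, j ∈ Pa i → α j) → α i → ℝ} {S : Finset (Fin n)}

theorem doProb_eq_sum_extensions [∀ i, Fintype (α i)] (s : ∀ j, j ∈ S → α j)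
    (Y : Fin n) (y : α Y) :
    doProb α Pa c S s Y y =
      ∑ v ∈ extensions s,
        if v Y = y then ∏ i ∈ Sᶜ, c i (fun j _ => v j) (v i) else 0 := by
  simp only [doProb, ite_and, ← mem_extensions, Finset.sum_ite_mem, Finset.univ_inter]

theorem doProb_eq_of_dependsOn_compl [∀ i, Fintype (α i)]
    (hc : ∀ i ∉ S, DependsOn (fun v : ∀ j, α j => c i fun j _ => v j) (S : Set (Fin n))ᶜ)
    {Y : Fin n} (hY : Y ∉ S) (y : α Y) (s s' : ∀ j, j ∈ S → α j) :
    doProb α Pa c S s Y y = doProb α Pa c S s' Y y := by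
  rw [doProb_eq_sum_extensions, doProb_eq_sum_extensions]
  have factorization_dependsOn :
      DependsOn (fun v : ∀ j, α j => ∏ i ∈ Sᶜ, c i (fun j _ => v j) (v i)) (S : Set (Fin n))ᶜ :=
    dependsOn_prod_apply (Finset.coe_compl S).subset fun i hi => hc i (Finset.mem_compl.mp hi)
  have summand_dependsOn :
      DependsOn (fun v : ∀ j, α j => if v Y = y then ∏ i ∈ Sᶜ, c i (fun j _ => v j) (v i) else 0)
        (S : Set (Fin n))ᶜ := fun v w hvw => by
    simp only [hvw Y hY, factorization_dependsOn hvw]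
  exact sum_extensions_eq_of_dependsOn_compl summand_dependsOn s s'

end DoProb

section LinearEdgeFlow

variable {ι R β : Type*} {α : ι → Type*} [DecidableEq ι] [NonUnitalNonAssocSemiring R]
  {P S : Finset ι}

/-- The linear edge-flow table of one variable, with values in `β`, parent set `P` and sensitive
set `S`: the combination of the fair flow `pF`, which sees the parents in `P \ S` jointly, and the
unfair flows `pU A`, each of which sees one parent `A ∈ P ∩ S`. Weights and flows are arbitrary, so
the table need not be stochastic. -/
def linearEdgeFlow (wF : R) (wU : ι → R) (pF : (∀ j, j ∈ P \ S → α j) → β → R)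
    (pU : ∀ A, α A → β → R) (pa : ∀ j, j ∈ P → α j) (x : β) : R :=
  wF * pF (fun j hj => pa j (Finset.mem_sdiff.mp hj).1) x +
    ∑ A ∈ (P ∩ S).attach, wU A.1 * pU A.1 (pa A.1 (Finset.mem_inter.mp A.2).1) x

theorem linearEdgeFlow_eq_fair {wU : ι → R} (hzero : ∀ A ∈ P ∩ S, wU A = 0) (wF : R)
    (pF : (∀ j, j ∈ P \ S → α j) → β → R) (pU : ∀ A, α A → β → R)
    (pa : ∀ j, j ∈ P → α j) (x : β) :
    linearEdgeFlow wF wU pF pU pa x =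
      wF * pF (fun j hj => pa j (Finset.mem_sdiff.mp hj).1) x := by
  have unfair_eq_zero : ∑ A ∈ (P ∩ S).attach,
      wU A.1 * pU A.1 (pa A.1 (Finset.mem_inter.mp A.2).1) x = 0 :=
    Finset.sum_eq_zero fun A _ => by rw [hzero A.1 A.2, zero_mul]
  rw [linearEdgeFlow, unfair_eq_zero, add_zero]

theorem dependsOn_linearEdgeFlow {wU : ι → R} (hzero : ∀ A ∈ P ∩ S, wU A = 0) (wF : R)
    (pF : (∀ j, j ∈ P \ S → α j) → β → R) (pU : ∀ A, α A → β → R) :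
    DependsOn (fun v : ∀ j, α j => linearEdgeFlow wF wU pF pU fun j _ => v j) (S : Set ι)ᶜ := by
  intro v w hvw
  have fair_eq : (fun j (_ : j ∈ P \ S) => v j) = fun j _ => w j :=
    funext₂ fun j hj => hvw j (Finset.mem_sdiff.mp hj).2
  funext x
  simp only [linearEdgeFlow_eq_fair hzero, fair_eq]

end LinearEdgeFlow

theorem zero_edge_unfairness_do_invariant_general
    {n : ℕ} {α : Fin n → Type} [∀ i, Fintype (α i)] {Pa : Fin n → Finset (Fin n)}
    {c : ∀ i : Fin n, (∀ j, j ∈ Pa i → α j) → α i → ℝ} {S : Finset (Fin n)}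
    {wF : Fin n → ℝ} {wU : Fin n → Fin n → ℝ}
    {pF : ∀ X : Fin n, (∀ j, j ∈ Pa X \ S → α j) → α X → ℝ}
    {pU : ∀ X A : Fin n, α A → α X → ℝ}
    (hmodel : ∀ X ∉ S, c X = linearEdgeFlow (wF X) (wU X) (pF X) (pU X))
    (hzero : ∀ X ∉ S, ∀ A ∈ Pa X ∩ S, wU X A = 0)
    {Y : Fin n} (hY : Y ∉ S) (y : α Y) (s s' : ∀ j, j ∈ S → α j) :
    doProb α Pa c S s Y y = doProb α Pa c S s' Y y := by
  refine doProb_eq_of_dependsOn_compl (fun X hX => ?_) hY y s s'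
  rw [hmodel X hX]
  exact dependsOn_linearEdgeFlow (hzero X hX) (wF X) (pF X) (pU X)

/-- In a discrete causal Bayesian network (variables indexed by `Fin n` with
finite nonempty value types `α i`, parent sets `Pa i ⊆ {j | j < i}` and CPTs `c i`) in
which every CPT follows the linear edge-flow model — for each variable `X` the unfair
parents are `U_X = Pa X ∩ S`, the fair parents are `F_X = Pa X \ S`, and
`c X pa x = w_F(X) · p_F X (pa|_{F_X}) x + ∑_{A ∈ U_X} w_{A→X} · p_U X A (pa A) x`
with `p_F X (·)` and `p_U X A (·)` probability mass functions on `α X` and weights in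
`[0,1]` summing to `1` — if the edge-unfairness weight `w_{A→X}` is zero for every unfair
edge `A→X`, then for every non-sensitive target `Y ∉ S` and value `y`, the interventional
distribution is independent of the intervened value:
`P(Y=y | do(S=s)) = P(Y=y | do(S=s'))` for all assignments `s, s'` to `S`. -/
theorem zero_edge_unfairness_do_invariant
    {n : ℕ} (α : Fin n → Type) [∀ i, Fintype (α i)] [∀ i, Nonempty (α i)]
    (Pa : Fin n → Finset (Fin n))
    (hPa : ∀ i : Fin n, ∀ j ∈ Pa i, j < i)
    (c : ∀ i : Fin n, (∀ j, j ∈ Pa i → α j) → α i → ℝ)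
    (hc_nonneg : ∀ (i : Fin n) (pa : ∀ j, j ∈ Pa i → α j) (x : α i), 0 ≤ c i pa x)
    (hc_sum : ∀ (i : Fin n) (pa : ∀ j, j ∈ Pa i → α j), ∑ x : α i, c i pa x = 1)
    (S : Finset (Fin n))
    -- linear edge-flow model data: weights and edge flows
    (wF : Fin n → ℝ) (wU : Fin n → Fin n → ℝ)
    (pF : ∀ X : Fin n, (∀ j, j ∈ Pa X \ S → α j) → α X → ℝ)
    (pU : ∀ X A : Fin n, α A → α X → ℝ)
    (hpF_nonneg : ∀ (X : Fin n) (paf : ∀ j, j ∈ Pa X \ S → α j) (x : α X), 0 ≤ pF X paf x)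
    (hpF_sum : ∀ (X : Fin n) (paf : ∀ j, j ∈ Pa X \ S → α j), ∑ x : α X, pF X paf x = 1)
    (hpU_nonneg : ∀ (X A : Fin n) (a : α A) (x : α X), 0 ≤ pU X A a x)
    (hpU_sum : ∀ (X A : Fin n) (a : α A), ∑ x : α X, pU X A a x = 1)
    (hwF : ∀ X : Fin n, 0 ≤ wF X ∧ wF X ≤ 1)
    (hwU : ∀ X : Fin n, ∀ A ∈ Pa X ∩ S, 0 ≤ wU X A ∧ wU X A ≤ 1)
    (hw_sum : ∀ X : Fin n, wF X + ∑ A ∈ (Pa X ∩ S).attach, wU X A.1 = 1)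
    -- every CPT follows the linear edge-flow model
    (hmodel : ∀ (X : Fin n) (pa : ∀ j, j ∈ Pa X → α j) (x : α X),
      c X pa x =
        wF X * pF X (fun j hj => pa j (Finset.mem_sdiff.mp hj).1) x +
          ∑ A ∈ (Pa X ∩ S).attach,
            wU X A.1 * pU X A.1 (pa A.1 (Finset.mem_inter.mp A.2).1) x)
    -- the edge-unfairness weight vanishes on every unfair edge
    (hzero : ∀ X : Fin n, ∀ A ∈ Pa X ∩ S, wU X A = 0)
    (Y : Fin n) (hY : Y ∉ S) (y : α Y)
    (s s' : ∀ j, j ∈ S → α j) :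
    doProb α Pa c S s Y y = doProb α Pa c S s' Y y :=
  zero_edge_unfairness_do_invariant_general (fun X _ => funext₂ (hmodel X))
    (fun X _ => hzero X) hY y s s'
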